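/- Lifting properties: for every player p ∈ {◦, •} and λ-terms t, u: (1) if t →h u then t^p →hτ u^p (head steps become silent checkers head steps); (2) if t^p →hch s for some checkers term s, then there is a λ-term u with t →h u and s = u^p; (3) t is a head normal form if and only if t^p is a checkers head normal form. -/

import Mathlib

set_option autoImplicit false

/-! ### Players -/

inductive Player : Type
  | white
  | black
deriving DecidableEq

/-- The opposite player. -/
def Player.op : Player → Player
  | .white => .black
  | .black => .white

/-- `gamma p q` is `0` if the players agree (silent) and `1` otherwise (interaction). -/
def Player.gamma (p q : Player) : ℕ := if p = q then 0 else 1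

/-! ### Ordinary λ-terms (de Bruijn representation) -/

inductive Lam : Type
  | var : ℕ → Lam
  | lam : Lam → Lam
  | app : Lam → Lam → Lam
deriving DecidableEq

namespace Lam

/-- Shift the free de Bruijn indices ≥ `d` by one. -/
def liftAt : Lam → ℕ → Lam
  | .var n, d => .var (if n < d then n else n + 1)
  | .lam t, d => .lam (t.liftAt (d + 1))
  | .app t u, d => .app (t.liftAt d) (u.liftAt d)

/-- Capture-avoiding substitution of `u` for the de Bruijn index `x`. -/
def subst : Lam → ℕ → Lam → Lam
  | .var n, x, u => if n = x then u else if x < n then .var (n - 1) else .var n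
  | .lam t, x, u => .lam (t.subst (x + 1) (u.liftAt 0))
  | .app t s, x, u => .app (t.subst x u) (s.subst x u)

end Lam

/-- Root β-rule: `(λx.t) u ↦ t[x:=u]`. -/
inductive LBetaRoot : Lam → Lam → Prop
  | beta (t u : Lam) : LBetaRoot (.app (.lam t) u) (t.subst 0 u)

/-- Root η-rule: `λx. t x ↦ t` with `x ∉ FV(t)` (enforced by the lifting). -/
inductive LEtaRoot : Lam → Lam → Prop
  | eta (t : Lam) : LEtaRoot (.lam (.app (t.liftAt 0) (.var 0))) t

/-- Closure of a root relation under all contexts. -/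
inductive LFull (R : Lam → Lam → Prop) : Lam → Lam → Prop
  | root {t u : Lam} : R t u → LFull R t u
  | lam {t u : Lam} : LFull R t u → LFull R (.lam t) (.lam u)
  | appL {t t' : Lam} (u : Lam) : LFull R t t' → LFull R (.app t u) (.app t' u)
  | appR (t : Lam) {u u' : Lam} : LFull R u u' → LFull R (.app t u) (.app t u')

/-- Closure under applicative spine contexts `⟨·⟩ t1 … tk`. -/
inductive LSpine (R : Lam → Lam → Prop) : Lam → Lam → Prop
  | root {t u : Lam} : R t u → LSpine R t u
  | appL {t t' : Lam} (u : Lam) : LSpine R t t' → LSpine R (.app t u) (.app t' u)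

/-- Closure under head contexts `λx1…xn.⟨·⟩ t1 … tk`. -/
inductive LHead (R : Lam → Lam → Prop) : Lam → Lam → Prop
  | spine {t u : Lam} : LSpine R t u → LHead R t u
  | lam {t u : Lam} : LHead R t u → LHead R (.lam t) (.lam u)

/-- β-reduction. -/
def LBeta : Lam → Lam → Prop := LFull LBetaRoot
/-- η-reduction. -/
def LEta : Lam → Lam → Prop := LFull LEtaRoot
/-- Head reduction. -/
def LHStep : Lam → Lam → Prop := LHead LBetaRoot
/-- Multistep head reduction. -/
def LHSteps : Lam → Lam → Prop := Relation.ReflTransGen LHStep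

/-- β-conversion (reflexive-symmetric-transitive closure of β-reduction). -/
def LBetaConv : Lam → Lam → Prop :=
  Relation.ReflTransGen (fun a b => LBeta a b ∨ LBeta b a)
/-- η-conversion. -/
def LEtaConv : Lam → Lam → Prop :=
  Relation.ReflTransGen (fun a b => LEta a b ∨ LEta b a)

/-- Head normal forms: no head step out of `t`. -/
def Lam.LHNF (t : Lam) : Prop := ∀ u, ¬ LHStep t u

/-- Head convergence: `t ⇓h`. -/
def Lam.HConv (t : Lam) : Prop := ∃ h, LHSteps t h ∧ h.LHNF

/-- Ordinary contexts (one hole). -/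
inductive LCtx : Type
  | hole : LCtx
  | lam : LCtx → LCtx
  | appL : LCtx → Lam → LCtx
  | appR : Lam → LCtx → LCtx

/-- Plugging (allowing variable capture). -/
def LCtx.fill : LCtx → Lam → Lam
  | .hole, t => t
  | .lam C, t => .lam (C.fill t)
  | .appL C u, t => .app (C.fill t) u
  | .appR s C, t => .app s (C.fill t)

/-- Head contextual preorder on λ-terms. -/
def CtxLe (t u : Lam) : Prop := ∀ C : LCtx, (C.fill t).HConv → (C.fill u).HConv

/-! ### Checkers terms -/

inductive CTerm : Type
  | var : ℕ → CTerm
  | lam : Player → CTerm → CTerm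
  | app : Player → CTerm → CTerm → CTerm
deriving DecidableEq

namespace CTerm

/-- Shift the free de Bruijn indices ≥ `d` by one. -/
def liftAt : CTerm → ℕ → CTerm
  | .var n, d => .var (if n < d then n else n + 1)
  | .lam p t, d => .lam p (t.liftAt (d + 1))
  | .app p t u, d => .app p (t.liftAt d) (u.liftAt d)

/-- Capture-avoiding substitution of `u` for the de Bruijn index `x`. -/
def subst : CTerm → ℕ → CTerm → CTerm
  | .var n, x, u => if n = x then u else if x < n then .var (n - 1) else .var n
  | .lam p t, x, u => .lam p (t.subst (x + 1) (u.liftAt 0))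
  | .app p t s, x, u => .app p (t.subst x u) (s.subst x u)

/-- The underlying ordinary λ-term of a checkers term. -/
def untag : CTerm → Lam
  | .var n => .var n
  | .lam _ t => .lam t.untag
  | .app _ t u => .app t.untag u.untag

end CTerm

/-- Player lifting: tag every abstraction and application with player `p`. -/
def Lam.tag : Lam → Player → CTerm
  | .var n, _ => .var n
  | .lam t, p => .lam p (t.tag p)
  | .app t u, p => .app p (t.tag p) (u.tag p)

/-- Silent β root rule: the abstraction and the application carry the same player. -/
inductive SilentRoot : CTerm → CTerm → Prop
  | beta (p : Player) (t u : CTerm) : SilentRoot (.app p (.lam p t) u) (t.subst 0 u)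

/-- Interaction β root rule: the application carries the opposite player of the abstraction. -/
inductive InterRoot : CTerm → CTerm → Prop
  | beta (p : Player) (t u : CTerm) : InterRoot (.app p.op (.lam p t) u) (t.subst 0 u)

/-- Closure of a root relation under all checkers contexts. -/
inductive CFull (R : CTerm → CTerm → Prop) : CTerm → CTerm → Prop
  | root {t u : CTerm} : R t u → CFull R t u
  | lam (p : Player) {t u : CTerm} : CFull R t u → CFull R (.lam p t) (.lam p u)
  | appL (p : Player) {t t' : CTerm} (u : CTerm) : CFull R t t' → CFull R (.app p t u) (.app p t' u)
  | appR (p : Player) (t : CTerm) {u u' : CTerm} : CFull R u u' → CFull R (.app p t u) (.app p t u')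

/-- Closure under applicative spine contexts `⟨·⟩ @_{q1} t1 … @_{qk} tk`. -/
inductive CSpine (R : CTerm → CTerm → Prop) : CTerm → CTerm → Prop
  | root {t u : CTerm} : R t u → CSpine R t u
  | appL (p : Player) {t t' : CTerm} (u : CTerm) : CSpine R t t' → CSpine R (.app p t u) (.app p t' u)

/-- Closure under checkers head contexts `λ_{p1}x1…λ_{pn}xn.⟨·⟩ @_{q1} t1 … @_{qk} tk`. -/
inductive CHead (R : CTerm → CTerm → Prop) : CTerm → CTerm → Prop
  | spine {t u : CTerm} : CSpine R t u → CHead R t u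
  | lam (p : Player) {t u : CTerm} : CHead R t u → CHead R (.lam p t) (.lam p u)

/-- Silent β-reduction `→τ`. -/
def StepTau : CTerm → CTerm → Prop := CFull SilentRoot
/-- Interaction β-reduction `→⊛`. -/
def StepInt : CTerm → CTerm → Prop := CFull InterRoot
/-- Checkers β-reduction `→βch`. -/
def StepBch (t u : CTerm) : Prop := StepTau t u ∨ StepInt t u

/-- Silent head reduction `→hτ`. -/
def HStepTau : CTerm → CTerm → Prop := CHead SilentRoot
/-- Interaction head reduction `→h⊛`. -/
def HStepInt : CTerm → CTerm → Prop := CHead InterRoot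
/-- Checkers head reduction `→hch`. -/
def HStepCh (t u : CTerm) : Prop := HStepTau t u ∨ HStepInt t u

/-- Checkers head normal form. -/
def CTerm.HNF (t : CTerm) : Prop := ∀ u, ¬ HStepCh t u

/-- `BigStep t k` means `t ⇓^k`: the (deterministic) checkers head evaluation of `t`
terminates and performs exactly `k` interaction steps. -/
inductive BigStep : CTerm → ℕ → Prop
  | nf {t : CTerm} : t.HNF → BigStep t 0
  | silent {t u : CTerm} {k : ℕ} : HStepTau t u → BigStep u k → BigStep t k
  | inter {t u : CTerm} {k : ℕ} : HStepInt t u → BigStep u k → BigStep t (k + 1)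

/-- `HRed t n i u`: a checkers head reduction sequence from `t` to `u` of length `n`
containing exactly `i` interaction steps. -/
inductive HRed : CTerm → ℕ → ℕ → CTerm → Prop
  | refl (t : CTerm) : HRed t 0 0 t
  | silent {t u s : CTerm} {n i : ℕ} : HStepTau t u → HRed u n i s → HRed t (n + 1) i s
  | inter {t u s : CTerm} {n i : ℕ} : HStepInt t u → HRed u n i s → HRed t (n + 1) (i + 1) s

/-- Checkers contexts (one hole). -/
inductive CCtx : Type
  | hole : CCtx
  | lam : Player → CCtx → CCtx
  | appL : Player → CCtx → CTerm → CCtx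
  | appR : Player → CTerm → CCtx → CCtx

/-- Plugging (allowing variable capture). -/
def CCtx.fill : CCtx → CTerm → CTerm
  | .hole, t => t
  | .lam p C, t => .lam p (C.fill t)
  | .appL p C u, t => .app p (C.fill t) u
  | .appR p s C, t => .app p s (C.fill t)

/-- Player lifting of ordinary contexts. -/
def LCtx.tag : LCtx → Player → CCtx
  | .hole, _ => .hole
  | .lam C, p => .lam p (C.tag p)
  | .appL C u, p => .appL p (C.tag p) (u.tag p)
  | .appR s C, p => .appR p (s.tag p) (C.tag p)

/-- Checkers interaction preorder `≼ctx⊛` on checkers terms. -/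
def IntCtxLe (t u : CTerm) : Prop :=
  ∀ (C : CCtx) (k : ℕ), BigStep (C.fill t) k → BigStep (C.fill u) k

/-- Checkers interaction improvement `≼imp⊛` on checkers terms. -/
def ImpCtxLe (t u : CTerm) : Prop :=
  ∀ (C : CCtx) (k : ℕ), BigStep (C.fill t) k → ∃ k', k' ≤ k ∧ BigStep (C.fill u) k'

/-- Interaction preorder `⊑int` on ordinary λ-terms, via black lifting. -/
def IntLe (t u : Lam) : Prop := IntCtxLe (t.tag .black) (u.tag .black)

/-- Interaction improvement `⊑int·imp` on ordinary λ-terms, via black lifting. -/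
def ImpLe (t u : Lam) : Prop := ImpCtxLe (t.tag .black) (u.tag .black)

/-- Interaction equivalence `≡int`. -/
def IntEq (t u : Lam) : Prop := IntLe t u ∧ IntLe u t

/-- Silent conversion `=τ`: reflexive-symmetric-transitive closure of `→τ`. -/
def SilentConv : CTerm → CTerm → Prop :=
  Relation.ReflTransGen (fun a b => StepTau a b ∨ StepTau b a)

/-!
Tagging with `p` commutes with substitution and turns every constructor into one carrying `p`.
Hence a β-redex is tagged to a silent redex and, conversely, every redex of `t.tag p` joins an
abstraction and an application of the same player `p`: it is silent, never an interaction, and it is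
the tag of a β-redex of `t`. Head contexts around a redex correspond constructor by constructor.
-/

theorem Player.op_ne_self (p : Player) : p.op ≠ p := by
  cases p <;> decide

namespace Lam

variable {p q : Player} {t : Lam}

theorem tag_eq_lam_iff {s : CTerm} :
    t.tag p = .lam q s ↔ q = p ∧ ∃ t', t = .lam t' ∧ s = t'.tag p := by
  cases t <;> simp [tag, eq_comm]

theorem tag_eq_app_iff {s v : CTerm} :
    t.tag p = .app q s v ↔ q = p ∧ ∃ t' u, t = .app t' u ∧ s = t'.tag p ∧ v = u.tag p := by
  cases t <;> simp [tag, eq_comm]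

theorem tag_liftAt (p : Player) (t : Lam) (d : ℕ) :
    (t.liftAt d).tag p = (t.tag p).liftAt d := by
  induction t generalizing d with
  | var n => rfl
  | lam t ih => simp only [liftAt, tag, CTerm.liftAt, ih]
  | app t u iht ihu => simp only [liftAt, tag, CTerm.liftAt, iht, ihu]

theorem tag_subst (p : Player) (t : Lam) (x : ℕ) (u : Lam) :
    (t.subst x u).tag p = (t.tag p).subst x (u.tag p) := by
  induction t generalizing x u with
  | var n =>
    simp only [subst, tag, CTerm.subst]
    split_ifs <;> rfl
  | lam t ih => simp only [subst, tag, CTerm.subst, ih, tag_liftAt]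
  | app t s iht ihs => simp only [subst, tag, CTerm.subst, iht, ihs]

end Lam

section HeadClosure

variable {R : Lam → Lam → Prop} {S : CTerm → CTerm → Prop} {p : Player} {t u : Lam} {s : CTerm}

theorem LSpine.tag (hRS : ∀ t u, R t u → S (t.tag p) (u.tag p)) (h : LSpine R t u) :
    CSpine S (t.tag p) (u.tag p) := by
  induction h with
  | root h => exact .root (hRS _ _ h)
  | appL v _ ih => exact .appL p (v.tag p) ih

theorem LHead.tag (hRS : ∀ t u, R t u → S (t.tag p) (u.tag p)) (h : LHead R t u) :
    CHead S (t.tag p) (u.tag p) := by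
  induction h with
  | spine h => exact .spine (h.tag hRS)
  | lam _ ih => exact .lam p ih

theorem CSpine.exists_of_tag (hSR : ∀ t s, S (t.tag p) s → ∃ u, R t u ∧ s = u.tag p)
    (h : CSpine S (t.tag p) s) : ∃ u, LSpine R t u ∧ s = u.tag p := by
  generalize ht : t.tag p = a at h
  induction h generalizing t with
  | root h =>
    subst ht
    obtain ⟨u, hu, rfl⟩ := hSR t _ h
    exact ⟨u, .root hu, rfl⟩
  | appL q v _ ih =>
    obtain ⟨rfl, t', v', rfl, rfl, rfl⟩ := Lam.tag_eq_app_iff.mp ht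
    obtain ⟨u, hu, rfl⟩ := ih rfl
    exact ⟨.app u v', .appL v' hu, rfl⟩

theorem CHead.exists_of_tag (hSR : ∀ t s, S (t.tag p) s → ∃ u, R t u ∧ s = u.tag p)
    (h : CHead S (t.tag p) s) : ∃ u, LHead R t u ∧ s = u.tag p := by
  generalize ht : t.tag p = a at h
  induction h generalizing t with
  | spine h =>
    subst ht
    obtain ⟨u, hu, rfl⟩ := h.exists_of_tag hSR
    exact ⟨u, .spine hu, rfl⟩
  | lam q _ ih =>
    obtain ⟨rfl, t', rfl, rfl⟩ := Lam.tag_eq_lam_iff.mp ht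
    obtain ⟨u, hu, rfl⟩ := ih rfl
    exact ⟨.lam u, .lam hu, rfl⟩

end HeadClosure

section Beta

variable {p : Player} {t u : Lam} {s : CTerm}

theorem LBetaRoot.silentRoot_tag (h : LBetaRoot t u) : SilentRoot (t.tag p) (u.tag p) := by
  obtain ⟨t, u⟩ := h
  rw [Lam.tag_subst]
  exact .beta p (t.tag p) (u.tag p)

theorem SilentRoot.exists_of_tag (h : SilentRoot (t.tag p) s) :
    ∃ u, LBetaRoot t u ∧ s = u.tag p := by
  generalize ht : t.tag p = a at h
  obtain ⟨q, b, v⟩ := h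
  obtain ⟨rfl, f, v', rfl, hf, rfl⟩ := Lam.tag_eq_app_iff.mp ht
  obtain ⟨-, b', rfl, rfl⟩ := Lam.tag_eq_lam_iff.mp hf.symm
  exact ⟨b'.subst 0 v', .beta b' v', (Lam.tag_subst q b' 0 v').symm⟩

theorem not_interRoot_tag : ¬ InterRoot (t.tag p) s := by
  intro h
  generalize ht : t.tag p = a at h
  obtain ⟨q, b, v⟩ := h
  obtain ⟨hop, f, v', -, hf, -⟩ := Lam.tag_eq_app_iff.mp ht
  obtain ⟨rfl, -⟩ := Lam.tag_eq_lam_iff.mp hf.symm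
  exact q.op_ne_self hop

theorem LHStep.hStepTau_tag (h : LHStep t u) : HStepTau (t.tag p) (u.tag p) :=
  LHead.tag (fun _ _ => LBetaRoot.silentRoot_tag) h

theorem HStepCh.exists_of_tag (h : HStepCh (t.tag p) s) : ∃ u, LHStep t u ∧ s = u.tag p := by
  rcases h with silent | interaction
  · exact CHead.exists_of_tag (fun _ _ => SilentRoot.exists_of_tag) silent
  · exact CHead.exists_of_tag (fun _ _ h => (not_interRoot_tag h).elim) interaction

theorem lHNF_iff_hNF_tag : t.LHNF ↔ (t.tag p).HNF := by
  constructor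
  · intro ht s hs
    obtain ⟨u, hu, -⟩ := hs.exists_of_tag
    exact ht u hu
  · intro ht u hu
    exact ht (u.tag p) (.inl hu.hStepTau_tag)

end Beta

/-- Lifting properties of the player liftings. -/
theorem lifting_properties (p : Player) :
    (∀ t u : Lam, LHStep t u → HStepTau (t.tag p) (u.tag p)) ∧
    (∀ (t : Lam) (s : CTerm), HStepCh (t.tag p) s → ∃ u : Lam, LHStep t u ∧ s = u.tag p) ∧
    (∀ t : Lam, t.LHNF ↔ (t.tag p).HNF) :=
  ⟨fun _ _ => LHStep.hStepTau_tag, fun _ _ => HStepCh.exists_of_tag, fun _ => lHNF_iff_hNF_tag⟩
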